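/- For each integer n ≥ 1, the Thue-Morse sequence has a nonempty factor whose least period is exactly n. -/

import Mathlib

/-- `n` is a period of the factor `x[i..j]` of the infinite word `x`:
`x t = x (t+n)` for all `i ≤ t ≤ j - n`. -/
def Period {A : Type*} (x : ℕ → A) (i j n : ℕ) : Prop :=
  ∀ t, i ≤ t → t + n ≤ j → x t = x (t + n)

/-- `n` is a least period of `x`: some nonempty factor `x[i..j]` has
minimal period `n`. -/
def LeastPeriod {A : Type*} (x : ℕ → A) (n : ℕ) : Prop :=
  ∃ i j, i ≤ j ∧ Period x i j n ∧ ∀ m, 0 < m → m < n → ¬ Period x i j m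

/-- The Thue-Morse sequence: sum of binary digits of `n`, mod 2. -/
def thueMorse (n : ℕ) : ℕ := (Nat.digits 2 n).sum % 2

/-!
Write `w` for a factor `t[i..j]` with no period below `j - i`. The Thue-Morse morphism `0 ↦ 01`,
`1 ↦ 10` maps `w` to `t[2i..2j+1]`, whose even periods are the doubles of the periods of `w`, and
an odd period of a factor of `t` leaves an overlap of at most three letters. So if at most one
letter is removed at each end of the image, only a border of two or three letters has to be
excluded, and this depends only on the two letters at each end of `w`. Words with exactly one end
doubled (`00` or `11`) reproduce themselves: removing one letter at a suitable end of the image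
takes `j - i` to `2(j - i)` and preserves whether the first and last letters agree, and removing
both takes `j - i` to `2(j - i) - 1` and reverses it. Following residues modulo 6, such words with
equal first and last letters exist for all `j - i = n ≥ 3` with `n ≢ 5 (mod 6)`; when
`n = 2c + 1 ≡ 5 (mod 6)`, the whole image of such a word with `j - i = c` and different first and
last letters has least period `n`.
-/

theorem Period.eq_of_add_eq {A : Type*} {x : ℕ → A} {i j m s u : ℕ} (h : Period x i j m)
    (his : i ≤ s) (hsu : s + m = u) (huj : u ≤ j) : x s = x u := by
  subst hsu
  exact h s his huj

theorem thueMorse_le_one (n : ℕ) : thueMorse n ≤ 1 :=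
  Nat.le_of_lt_succ (Nat.mod_lt _ two_pos)

theorem thueMorse_two_mul (n : ℕ) : thueMorse (2 * n) = thueMorse n := by
  rcases n.eq_zero_or_pos with rfl | hn
  · rfl
  · rw [thueMorse, Nat.digits_base_mul one_lt_two hn, List.sum_cons, zero_add, thueMorse]

theorem thueMorse_two_mul_add_one (n : ℕ) : thueMorse (2 * n + 1) = 1 - thueMorse n := by
  have hdigits : Nat.digits 2 (2 * n + 1) = 1 :: Nat.digits 2 n := by
    rw [add_comm, Nat.digits_add 2 one_lt_two 1 n one_lt_two (.inl one_ne_zero)]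
  simp only [thueMorse, hdigits, List.sum_cons]
  omega

theorem thueMorse_eq_of_ne_of_ne {a b c : ℕ} (hac : thueMorse a ≠ thueMorse c)
    (hbc : thueMorse b ≠ thueMorse c) : thueMorse a = thueMorse b := by
  have ha := thueMorse_le_one a
  have hb := thueMorse_le_one b
  have hc := thueMorse_le_one c
  omega

theorem thueMorse_odd_eq_odd_iff {a b : ℕ} :
    thueMorse (2 * a + 1) = thueMorse (2 * b + 1) ↔ thueMorse a = thueMorse b := by
  have ha := thueMorse_le_one a
  have hb := thueMorse_le_one b
  rw [thueMorse_two_mul_add_one, thueMorse_two_mul_add_one]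
  omega

theorem thueMorse_odd_eq_even_iff {a b : ℕ} :
    thueMorse (2 * a + 1) = thueMorse (2 * b) ↔ thueMorse a ≠ thueMorse b := by
  have ha := thueMorse_le_one a
  have hb := thueMorse_le_one b
  rw [thueMorse_two_mul_add_one, thueMorse_two_mul]
  omega

theorem thueMorse_even_eq_odd_iff {a b : ℕ} :
    thueMorse (2 * a) = thueMorse (2 * b + 1) ↔ thueMorse a ≠ thueMorse b := by
  rw [eq_comm, thueMorse_odd_eq_even_iff, ne_comm]

theorem thueMorse_even_ne_succ (a : ℕ) : thueMorse (2 * a) ≠ thueMorse (2 * a + 1) :=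
  fun h => thueMorse_even_eq_odd_iff.1 h rfl

theorem thueMorse_not_cube (w : ℕ) :
    ¬(thueMorse w = thueMorse (w + 1) ∧ thueMorse (w + 1) = thueMorse (w + 2)) := by
  rintro ⟨h₁, h₂⟩
  obtain ⟨v, rfl | rfl⟩ := w.even_or_odd'
  · exact thueMorse_even_ne_succ v h₁
  · exact thueMorse_even_ne_succ (v + 1) h₂

theorem thueMorse_even_window_ne_odd_window (u w : ℕ) :
    ¬∀ d < 4, thueMorse (2 * u + d) = thueMorse (2 * w + 1 + d) := by
  intro h
  have h₀ : thueMorse w ≠ thueMorse u := (thueMorse_even_eq_odd_iff.1 (h 0 (by decide))).symm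
  have h₁ : thueMorse (w + 1) ≠ thueMorse u :=
    (thueMorse_odd_eq_even_iff (b := w + 1).1 (h 1 (by decide))).symm
  have h₂ : thueMorse (w + 1) ≠ thueMorse (u + 1) :=
    (thueMorse_even_eq_odd_iff (a := u + 1) (b := w + 1).1 (h 2 (by decide))).symm
  have h₃ : thueMorse (w + 2) ≠ thueMorse (u + 1) :=
    (thueMorse_odd_eq_even_iff (a := u + 1) (b := w + 2).1 (h 3 (by decide))).symm
  exact thueMorse_not_cube w ⟨thueMorse_eq_of_ne_of_ne h₀ h₁, thueMorse_eq_of_ne_of_ne h₂ h₃⟩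

theorem Period.lt_add_three_of_odd {i j m : ℕ} (h : Period thueMorse i j m) (hm : Odd m) :
    j < i + m + 3 := by
  by_contra! hj
  obtain ⟨v, rfl⟩ := hm
  have hwindow : ∀ d < 4, ∀ u, i + d + (2 * v + 1) = u → thueMorse (i + d) = thueMorse u :=
    fun d hd u hu => h.eq_of_add_eq (by omega) hu (by omega)
  obtain ⟨a, rfl | rfl⟩ := i.even_or_odd'
  · exact thueMorse_even_window_ne_odd_window a (a + v) fun d hd => hwindow d hd _ (by omega)
  · exact thueMorse_even_window_ne_odd_window (a + v + 1) a
      fun d hd => (hwindow d hd _ (by omega)).symm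

theorem Period.of_two_mul {i j I J m : ℕ} (h : Period thueMorse I J (2 * m)) (hI : I ≤ 2 * i + 1)
    (hJ : 2 * j ≤ J) (hm : i + m < j) : Period thueMorse i j m := by
  intro s his hsj
  rcases hsj.lt_or_eq with hlt | heq
  · exact thueMorse_odd_eq_odd_iff.1 (h.eq_of_add_eq (by omega) (by omega) (by omega))
  · rw [← thueMorse_two_mul s, ← thueMorse_two_mul (s + m)]
    exact h.eq_of_add_eq (by omega) (by omega) (by omega)

/-- The factor `x[i..j]` has no period smaller than `j - i`; equivalently, no proper border of
more than one letter. This is the property carried along the doubling construction. -/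
def NoShortPeriod {A : Type*} (x : ℕ → A) (i j : ℕ) : Prop :=
  ∀ m, 0 < m → i + m < j → ¬Period x i j m

theorem NoShortPeriod.leastPeriod {A : Type*} {x : ℕ → A} {i n : ℕ}
    (h : NoShortPeriod x i (i + n)) (hx : x i = x (i + n)) : LeastPeriod x n := by
  refine ⟨i, i + n, Nat.le_add_right i n, fun s his hsn => ?_, fun m hm hmn => h m hm (by omega)⟩
  obtain rfl : s = i := by omega
  exact hx

section Doubling

variable {i j : ℕ}

theorem NoShortPeriod.period_dichotomy {I J m : ℕ} (h : NoShortPeriod thueMorse i j)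
    (hI : I ≤ 2 * i + 1) (hJ : 2 * j ≤ J) (hm : 0 < m) (hper : Period thueMorse I J m) :
    (m % 2 = 0 ∧ 2 * j ≤ 2 * i + m) ∨ (m % 2 = 1 ∧ J ≤ I + m + 2) := by
  rcases m.even_or_odd with heven | hodd
  · obtain ⟨v, rfl⟩ := heven.two_dvd
    refine .inl ⟨by omega, ?_⟩
    by_contra! hlt
    exact h v (by omega) (by omega) (hper.of_two_mul hI hJ (by omega))
  · exact .inr ⟨Nat.odd_iff.1 hodd, Nat.le_of_lt_succ (hper.lt_add_three_of_odd hodd)⟩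

theorem NoShortPeriod.image_tail (h : NoShortPeriod thueMorse i j)
    (hleft : thueMorse i ≠ thueMorse (i + 1)) :
    NoShortPeriod thueMorse (2 * i + 1) (2 * j + 1) := by
  intro m hm hlt hper
  have hborder : 2 * i + 1 + m = 2 * j := by
    have := h.period_dichotomy le_rfl (Nat.le_succ _) hm hper
    omega
  have hfirst : thueMorse i ≠ thueMorse j :=
    thueMorse_odd_eq_even_iff.1 (hper.eq_of_add_eq le_rfl hborder (by omega))
  have hsecond : thueMorse (i + 1) ≠ thueMorse j :=
    thueMorse_even_eq_odd_iff.1 (hper.eq_of_add_eq (by omega) (by omega) (by omega))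
  exact hleft (thueMorse_eq_of_ne_of_ne hfirst hsecond)

theorem NoShortPeriod.image_dropLast (h : NoShortPeriod thueMorse i j)
    (hright : thueMorse (j - 1) ≠ thueMorse j) : NoShortPeriod thueMorse (2 * i) (2 * j) := by
  intro m hm hlt hper
  have hborder : 2 * i + m = 2 * (j - 1) + 1 := by
    have := h.period_dichotomy (Nat.le_succ _) le_rfl hm hper
    omega
  have hpenultimate : thueMorse i ≠ thueMorse (j - 1) :=
    thueMorse_even_eq_odd_iff.1 (hper.eq_of_add_eq le_rfl hborder (by omega))
  have hlast : thueMorse i ≠ thueMorse j :=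
    thueMorse_odd_eq_even_iff.1 (hper.eq_of_add_eq (by omega) (by omega) le_rfl)
  exact hright (thueMorse_eq_of_ne_of_ne hpenultimate.symm hlast.symm)

theorem NoShortPeriod.image_interior (h : NoShortPeriod thueMorse i j)
    (hends : thueMorse i ≠ thueMorse (i + 1) ∨ thueMorse (j - 1) ≠ thueMorse j) :
    NoShortPeriod thueMorse (2 * i + 1) (2 * j) := by
  intro m hm hlt hper
  have hborder : 2 * i + 1 + m = 2 * (j - 1) := by
    have := h.period_dichotomy le_rfl le_rfl hm hper
    omega
  have hfirst : thueMorse i ≠ thueMorse (j - 1) :=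
    thueMorse_odd_eq_even_iff.1 (hper.eq_of_add_eq le_rfl hborder (by omega))
  have hmiddle : thueMorse (i + 1) ≠ thueMorse (j - 1) :=
    thueMorse_even_eq_odd_iff.1 (hper.eq_of_add_eq (by omega) (by omega) (by omega))
  have hlast : thueMorse (i + 1) ≠ thueMorse j :=
    thueMorse_odd_eq_even_iff.1 (hper.eq_of_add_eq (by omega) (by omega) le_rfl)
  rcases hends with hleft | hright
  · exact hleft (thueMorse_eq_of_ne_of_ne hfirst hmiddle)
  · exact hright (thueMorse_eq_of_ne_of_ne hmiddle.symm hlast.symm)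

theorem NoShortPeriod.image (h : NoShortPeriod thueMorse i j)
    (hends : thueMorse i ≠ thueMorse (i + 1) ∨ thueMorse (j - 1) ≠ thueMorse j)
    (hij : thueMorse i ≠ thueMorse j) : NoShortPeriod thueMorse (2 * i) (2 * j + 1) := by
  intro m hm hlt hper
  have hborder : 2 * i + m = 2 * (j - 1) + 1 := by
    rcases h.period_dichotomy (Nat.le_succ _) (Nat.le_succ _) hm hper with ⟨-, hge⟩ | hodd
    · have heq : thueMorse (2 * i) = thueMorse (2 * j) :=
        hper.eq_of_add_eq le_rfl (by omega) (Nat.le_succ _)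
      rw [thueMorse_two_mul, thueMorse_two_mul] at heq
      exact absurd heq hij
    · omega
  have hpenultimate : thueMorse i ≠ thueMorse (j - 1) :=
    thueMorse_even_eq_odd_iff.1 (hper.eq_of_add_eq le_rfl hborder (by omega))
  have hlast : thueMorse (i + 1) ≠ thueMorse j :=
    thueMorse_even_eq_odd_iff.1 (hper.eq_of_add_eq (by omega) (by omega) le_rfl)
  rcases hends with hleft | hright
  · exact hleft (thueMorse_eq_of_ne_of_ne hij hlast)
  · exact hright (thueMorse_eq_of_ne_of_ne hpenultimate.symm hij.symm)

end Doubling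

/-- The factor `t[i..j]` of the Thue-Morse word has no period smaller than `j - i`, and exactly one
of its two ends is a doubled letter. This is the class of words closed under doubling; the
condition `i < j` makes `j - 1` the position of the last letter but one. -/
structure OneSided (i j : ℕ) : Prop where
  lt : i < j
  noShortPeriod : NoShortPeriod thueMorse i j
  doubled_iff : thueMorse i = thueMorse (i + 1) ↔ thueMorse (j - 1) ≠ thueMorse j

namespace OneSided

variable {i j n : ℕ}

theorem ends (h : OneSided i j) :
    thueMorse i ≠ thueMorse (i + 1) ∨ thueMorse (j - 1) ≠ thueMorse j :=
  (em' _).imp_right h.doubled_iff.1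

theorem image_tail (hlt : i < j) (h : NoShortPeriod thueMorse i j)
    (hleft : thueMorse i ≠ thueMorse (i + 1)) : OneSided (2 * i + 1) (2 * j + 1) where
  lt := by omega
  noShortPeriod := h.image_tail hleft
  doubled_iff :=
    iff_of_true (thueMorse_odd_eq_even_iff (b := i + 1).2 hleft) (thueMorse_even_ne_succ j)

theorem image_dropLast (hlt : i < j) (h : NoShortPeriod thueMorse i j)
    (hright : thueMorse (j - 1) ≠ thueMorse j) : OneSided (2 * i) (2 * j) where
  lt := by omega
  noShortPeriod := h.image_dropLast hright
  doubled_iff := by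
    rw [show 2 * j - 1 = 2 * (j - 1) + 1 by omega]
    exact iff_of_false (thueMorse_even_ne_succ i)
      (not_not_intro (thueMorse_odd_eq_even_iff.2 hright))

theorem image_interior (h : OneSided i j) : OneSided (2 * i + 1) (2 * j) where
  lt := by have := h.lt; omega
  noShortPeriod := h.noShortPeriod.image_interior h.ends
  doubled_iff := by
    have hlt := h.lt
    rw [show 2 * i + 1 + 1 = 2 * (i + 1) by ring, show 2 * j - 1 = 2 * (j - 1) + 1 by omega,
      Ne, thueMorse_odd_eq_even_iff, thueMorse_odd_eq_even_iff, Ne, h.doubled_iff]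

theorem exists_two_mul (hn : 0 < n) (h : NoShortPeriod thueMorse i (i + n))
    (hends : thueMorse i ≠ thueMorse (i + 1) ∨ thueMorse (i + n - 1) ≠ thueMorse (i + n)) :
    ∃ a, OneSided a (a + 2 * n) ∧
      (thueMorse a = thueMorse (a + 2 * n) ↔ thueMorse i = thueMorse (i + n)) := by
  have hlt : i < i + n := Nat.lt_add_of_pos_right hn
  rcases hends with hleft | hright
  · refine ⟨2 * i + 1, ?_⟩
    rw [show 2 * i + 1 + 2 * n = 2 * (i + n) + 1 by ring]
    exact ⟨image_tail hlt h hleft, thueMorse_odd_eq_odd_iff⟩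
  · refine ⟨2 * i, ?_⟩
    rw [← mul_add, thueMorse_two_mul, thueMorse_two_mul]
    exact ⟨image_dropLast hlt h hright, Iff.rfl⟩

theorem exists_two_mul_sub_one (h : OneSided i (i + n)) :
    ∃ a, OneSided a (a + (2 * n - 1)) ∧
      (thueMorse a = thueMorse (a + (2 * n - 1)) ↔ thueMorse i ≠ thueMorse (i + n)) := by
  refine ⟨2 * i + 1, ?_⟩
  have hlt := h.lt
  rw [show 2 * i + 1 + (2 * n - 1) = 2 * (i + n) by omega]
  exact ⟨h.image_interior, thueMorse_odd_eq_even_iff⟩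

end OneSided

/-- `n` is the length minus one of a one-sided factor with different first and last letters. -/
def HasUnborderedOneSided (n : ℕ) : Prop :=
  ∃ i, OneSided i (i + n) ∧ thueMorse i ≠ thueMorse (i + n)

/-- `n` is the length minus one, hence the least period, of a one-sided factor with equal first
and last letters. -/
def HasBorderedOneSided (n : ℕ) : Prop :=
  ∃ i, OneSided i (i + n) ∧ thueMorse i = thueMorse (i + n)

/-- Like `HasBorderedOneSided`, but only excluding that both ends are doubled letters; this weaker
property is available for every `n ≥ 2`. -/
def HasBordered (n : ℕ) : Prop :=
  ∃ i, NoShortPeriod thueMorse i (i + n) ∧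
    (thueMorse i ≠ thueMorse (i + 1) ∨ thueMorse (i + n - 1) ≠ thueMorse (i + n)) ∧
    thueMorse i = thueMorse (i + n)

theorem HasBorderedOneSided.hasBordered {n : ℕ} : HasBorderedOneSided n → HasBordered n :=
  fun ⟨i, h, heq⟩ => ⟨i, h.noShortPeriod, h.ends, heq⟩

theorem HasBordered.leastPeriod {n : ℕ} : HasBordered n → LeastPeriod thueMorse n :=
  fun ⟨_, h, _, heq⟩ => h.leastPeriod heq

theorem HasBordered.two_mul {n : ℕ} (hn : 0 < n) :
    HasBordered n → HasBorderedOneSided (2 * n) := by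
  rintro ⟨i, h, hends, heq⟩
  obtain ⟨a, ha, hiff⟩ := OneSided.exists_two_mul hn h hends
  exact ⟨a, ha, hiff.2 heq⟩

theorem HasBorderedOneSided.two_mul_sub_one {n : ℕ} :
    HasBorderedOneSided n → HasUnborderedOneSided (2 * n - 1) := by
  rintro ⟨i, h, heq⟩
  obtain ⟨a, ha, hiff⟩ := h.exists_two_mul_sub_one
  exact ⟨a, ha, fun hne => hiff.1 hne heq⟩

namespace HasUnborderedOneSided

variable {n : ℕ}

theorem two_mul : HasUnborderedOneSided n → HasUnborderedOneSided (2 * n) := by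
  rintro ⟨i, h, hne⟩
  have hn : 0 < n := Nat.lt_add_right_iff_pos.1 h.lt
  obtain ⟨a, ha, hiff⟩ := OneSided.exists_two_mul hn h.noShortPeriod h.ends
  exact ⟨a, ha, mt hiff.1 hne⟩

theorem two_mul_sub_one : HasUnborderedOneSided n → HasBorderedOneSided (2 * n - 1) := by
  rintro ⟨i, h, hne⟩
  obtain ⟨a, ha, hiff⟩ := h.exists_two_mul_sub_one
  exact ⟨a, ha, hiff.2 hne⟩

theorem two_mul_add_one : HasUnborderedOneSided n → HasBordered (2 * n + 1) := by
  rintro ⟨i, h, hne⟩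
  have hj : 2 * i + (2 * n + 1) = 2 * (i + n) + 1 := by ring
  refine ⟨2 * i, ?_, .inl (thueMorse_even_ne_succ i), ?_⟩
  · rw [hj]
    exact h.noShortPeriod.image h.ends hne
  · rw [hj]
    exact thueMorse_even_eq_odd_iff.2 hne

end HasUnborderedOneSided

theorem hasUnborderedOneSided_two : HasUnborderedOneSided 2 := by
  -- `t[5..7] = 001`
  refine ⟨5, ⟨by decide, fun m hm hlt hper => ?_, by decide⟩, by decide⟩
  obtain rfl : m = 1 := by omega
  exact absurd (hper 6 (by decide) (by decide)) (by decide)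

theorem hasBordered_two : HasBordered 2 := by
  -- `t[3..5] = 010`
  refine ⟨3, fun m hm hlt hper => ?_, by decide, by decide⟩
  obtain rfl : m = 1 := by omega
  exact absurd (hper 3 (by decide) (by decide)) (by decide)

theorem hasBordered_of_oneSided {n : ℕ} (hn : 2 ≤ n)
    (hunbordered : n % 6 = 5 → HasUnborderedOneSided ((n - 1) / 2))
    (hbordered : 3 ≤ n → n % 6 ≠ 5 → HasBorderedOneSided n) : HasBordered n := by
  obtain rfl | hlt := hn.eq_or_lt
  · exact hasBordered_two
  by_cases hmod : n % 6 = 5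
  · have himage := (hunbordered hmod).two_mul_add_one
    rwa [show 2 * ((n - 1) / 2) + 1 = n by omega] at himage
  · exact (hbordered hlt hmod).hasBordered

theorem hasOneSided_of_mod (n : ℕ) :
    (2 ≤ n → n % 3 ≠ 0 → HasUnborderedOneSided n) ∧
      (3 ≤ n → n % 6 ≠ 5 → HasBorderedOneSided n) := by
  induction n using Nat.strong_induction_on with
  | _ n ih =>
    obtain ⟨m, rfl | rfl⟩ : ∃ m, n = 2 * m ∨ n = 2 * m - 1 := ⟨(n + 1) / 2, by omega⟩
    · constructor
      · intro h₂ hmod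
        obtain rfl | hm : m = 1 ∨ 2 ≤ m := by omega
        · exact hasUnborderedOneSided_two
        · exact ((ih m (by omega)).1 hm (by omega)).two_mul
      · intro h₃ _
        refine HasBordered.two_mul (by omega) (hasBordered_of_oneSided (by omega) ?_ ?_)
        · exact fun hmod => (ih ((m - 1) / 2) (by omega)).1 (by omega) (by omega)
        · exact (ih m (by omega)).2
    · constructor
      · intro h₂ hmod
        exact ((ih m (by omega)).2 (by omega) (by omega)).two_mul_sub_one
      · intro h₃ hmod
        exact ((ih m (by omega)).1 (by omega) (by omega)).two_mul_sub_one

theorem hasBordered {n : ℕ} (hn : 2 ≤ n) : HasBordered n :=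
  hasBordered_of_oneSided hn (fun _ => (hasOneSided_of_mod _).1 (by omega) (by omega))
    (hasOneSided_of_mod n).2

theorem thueMorse_leastPeriod (n : ℕ) (hn : 1 ≤ n) :
    LeastPeriod thueMorse n := by
  obtain rfl | hlt := hn.eq_or_lt
  · exact NoShortPeriod.leastPeriod (i := 1) (fun m hm hlt => by omega) (by decide)
  · exact (hasBordered hlt).leastPeriod
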